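/- Let (a_k)_{k=0}^∞ be a nonnegative sequence with a_0 > 0, a_1 > 0, a_2 > 0 and a_k = 0 for all k ≥ 3. Then (a_k) is a TP_∞-preserver if and only if the quadratic polynomial a_0 + a_1 z + a_2 z^2 has only real (necessarily negative) zeros, i.e., a_1^2 − 4 a_0 a_2 ≥ 0. Moreover, (a_k) maps every TP_∞ sequence to a TP_∞ sequence if and only if it maps every 2-times positive sequence to a TP_∞ sequence. -/

import Mathlib

/-- A real sequence `(a_k)` is totally positive (TP_∞) if all finite minors of the
infinite Toeplitz matrix `(a_{j-i})` (with `a_k = 0` for `k < 0`) are nonnegative. -/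
def IsTotallyPositive (a : ℕ → ℝ) : Prop :=
  ∀ (n : ℕ) (i j : Fin n → ℕ), StrictMono i → StrictMono j →
    0 ≤ (Matrix.of fun p q : Fin n => if i p ≤ j q then a (j q - i p) else 0).det

/-- A real sequence is `m`-times positive (TP_m) if all such minors of order at most `m`
are nonnegative. -/
def IsMultiplyPositive (m : ℕ) (a : ℕ → ℝ) : Prop :=
  ∀ (n : ℕ), n ≤ m → ∀ (i j : Fin n → ℕ), StrictMono i → StrictMono j →
    0 ≤ (Matrix.of fun p q : Fin n => if i p ≤ j q then a (j q - i p) else 0).det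

/-- A nonnegative sequence `(a_k)` is a TP_∞-preserver if for every totally positive
sequence `(b_k)`, the sequence `(a_k b_k)` is totally positive. -/
def IsTPPreserver (a : ℕ → ℝ) : Prop :=
  ∀ b : ℕ → ℝ, IsTotallyPositive b → IsTotallyPositive (fun k => a k * b k)

/-!
Multiplying a generating function by `r + s z` with `r, s ≥ 0` replaces each row of the Toeplitz
matrix by a nonnegative combination of itself and the next row, which keeps all minors nonnegative.
Hence nonnegative sequences with a real-rooted generating polynomial are totally positive. A 2-times
positive `b` satisfies `b₀ b₂ ≤ b₁²`, so `(a₀ b₀, a₁ b₁, a₂ b₂)` inherits a nonnegative discriminant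
from `a`.

Conversely, a preserver is itself totally positive because it maps the constant sequence `1` to
itself. If `a₁² < 4 a₀ a₂`, put `a₀ a₂ = r²` and `a₁ = 2 r cos θ` with `0 < θ < π`; the tridiagonal
minors `det (a_{q + 1 - p})_{p, q < n}` are `rⁿ Uₙ(cos θ) = rⁿ sin ((n + 1) θ) / sin θ`, and one of
them is negative.
-/

open Polynomial

section Determinant

variable {R : Type*} [CommRing R] {n : ℕ}

theorem det_eq_mul_det_succ_of_col_zero (A : Matrix (Fin (n + 1)) (Fin (n + 1)) R)
    (hA : ∀ p : Fin n, A p.succ 0 = 0) :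
    A.det = A 0 0 * (A.submatrix Fin.succ Fin.succ).det := by
  simp [Matrix.det_succ_column_zero, Fin.sum_univ_succ, hA]

theorem det_eq_mul_det_succ_of_row_zero (A : Matrix (Fin (n + 1)) (Fin (n + 1)) R)
    (hA : ∀ q : Fin n, A 0 q.succ = 0) :
    A.det = A 0 0 * (A.submatrix Fin.succ Fin.succ).det := by
  simp [Matrix.det_succ_row_zero, Fin.sum_univ_succ, hA]

end Determinant

/-! ### Totally nonnegative matrices -/

section TotallyNonneg

/-- A matrix, possibly infinite, indexed by ordered types is totally nonnegative if all its finite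
minors are nonnegative. -/
def IsTotallyNonneg {α β R : Type*} [Preorder α] [Preorder β] [CommRing R] [LE R]
    (A : Matrix α β R) : Prop :=
  ∀ (n : ℕ) (i : Fin n → α) (j : Fin n → β), StrictMono i → StrictMono j →
    0 ≤ (A.submatrix i j).det

variable {α β R : Type*} [PartialOrder α] [Preorder β] [CommRing R] [PartialOrder R]

theorem IsTotallyNonneg.det_submatrix_nonneg_of_monotone {A : Matrix α β R}
    (hA : IsTotallyNonneg A) {n : ℕ} {i : Fin n → α} {j : Fin n → β} (hi : Monotone i)
    (hj : StrictMono j) : 0 ≤ (A.submatrix i j).det := by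
  by_cases hinj : Function.Injective i
  · exact hA n i j (hi.strictMono_of_injective hinj) hj
  · obtain ⟨p, p', heq, hne⟩ := Function.not_injective_iff.1 hinj
    refine (Matrix.det_zero_of_row_eq hne ?_).ge
    ext q
    simp only [Matrix.submatrix_apply, heq]

theorem IsTotallyNonneg.bidiagonal_combination [IsOrderedRing R] {A : Matrix ℕ β R}
    (hA : IsTotallyNonneg A) {r s : ℕ → R} (hr : ∀ i, 0 ≤ r i) (hs : ∀ i, 0 ≤ s i) :
    IsTotallyNonneg (Matrix.of fun i j => r i * A i j + s i * A (i + 1) j) := by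
  intro n i j hi hj
  let row (k : ℕ) : Fin n → R := fun q => A k (j q)
  have rows_eq : (Matrix.of fun i j => r i * A i j + s i * A (i + 1) j).submatrix i j =
      (fun p => r (i p) • row (i p)) + fun p => s (i p) • row (i p + 1) := rfl
  change 0 ≤ Matrix.detRowAlternating _
  rw [rows_eq, AlternatingMap.map_add_univ]
  refine Finset.sum_nonneg fun S _ => ?_
  -- Choosing row `i p` or row `i p + 1` for each `p` gives weakly increasing row indices.
  let i' (p : Fin n) : ℕ := if p ∈ S then i p else i p + 1
  have piecewise_eq :
      (S.piecewise (fun p => r (i p) • row (i p)) fun p => s (i p) • row (i p + 1)) =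
        fun p => (if p ∈ S then r (i p) else s (i p)) • row (i' p) := by
    funext p
    by_cases hp : p ∈ S <;> simp [i', hp]
  have i'_monotone : Monotone i' := by
    intro p p' hpp'
    rcases hpp'.eq_or_lt with rfl | hlt
    · exact le_rfl
    · have := hi hlt
      grind
  rw [piecewise_eq, AlternatingMap.map_smul_univ, smul_eq_mul]
  refine mul_nonneg (Finset.prod_nonneg fun p _ => ?_)
    (hA.det_submatrix_nonneg_of_monotone i'_monotone hj)
  split_ifs
  exacts [hr _, hs _]

theorem isTotallyNonneg_one [DecidableEq α] [IsOrderedRing R] :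
    IsTotallyNonneg (1 : Matrix α α R) := by
  intro n i j hi hj
  by_cases hsub : Set.range j ⊆ Set.range i
  · have range_eq : Set.range j = Set.range i :=
      Set.eq_of_subset_of_ncard_le hsub <| by
        rw [Set.ncard_range_of_injective hi.injective, Set.ncard_range_of_injective hj.injective]
    rw [(hj.range_inj hi).1 range_eq, Matrix.submatrix_one _ hi.injective, Matrix.det_one]
    exact zero_le_one
  · obtain ⟨_, ⟨q, rfl⟩, hq⟩ := Set.not_subset.1 hsub
    refine (Matrix.det_eq_zero_of_column_eq_zero q fun p => ?_).ge
    exact Matrix.one_apply_ne fun h => hq ⟨p, h⟩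

theorem isTotallyNonneg_upperTriangular_ones [DecidableLE α] [IsOrderedRing R] :
    IsTotallyNonneg (Matrix.of fun i j : α => if i ≤ j then (1 : R) else 0) := by
  intro n
  induction n with
  | zero => intro i j _ _; simp
  | succ n ih =>
    intro i j hi hj
    by_cases hcol : ∃ p : Fin n, i p.succ ≤ j 0
    · obtain ⟨p, hp⟩ := hcol
      -- Rows `0` and `p + 1` of the minor both consist of ones.
      refine (Matrix.det_zero_of_row_eq (Fin.succ_ne_zero p).symm ?_).ge
      ext q
      have hpq : i p.succ ≤ j q := hp.trans (hj.monotone (Fin.zero_le q))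
      simp [hpq, (hi p.succ_pos).le.trans hpq]
    · push Not at hcol
      rw [det_eq_mul_det_succ_of_col_zero _ fun p => if_neg (hcol p)]
      refine mul_nonneg ?_ (ih _ _ (hi.comp Fin.strictMono_succ) (hj.comp Fin.strictMono_succ))
      rw [Matrix.submatrix_apply, Matrix.of_apply]
      split_ifs
      exacts [zero_le_one, le_rfl]

end TotallyNonneg

/-! ### Toeplitz matrices -/

section Toeplitz

variable {R : Type*}

/-- The infinite upper triangular Toeplitz matrix `(a_{j-i})` of a sequence, with `a_k = 0` for
`k < 0`. -/
def toeplitz [Zero R] (a : ℕ → R) : Matrix ℕ ℕ R :=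
  Matrix.of fun i j => if i ≤ j then a (j - i) else 0

theorem isTotallyPositive_iff_isTotallyNonneg_toeplitz {a : ℕ → ℝ} :
    IsTotallyPositive a ↔ IsTotallyNonneg (toeplitz a) :=
  Iff.rfl

theorem toeplitz_coeff_one [Semiring R] : toeplitz (1 : R[X]).coeff = 1 := by
  ext i j
  simp only [toeplitz, Matrix.of_apply, coeff_one, Matrix.one_apply]
  grind

theorem toeplitz_coeff_linear_mul [Semiring R] (r s : R) (P : R[X]) :
    toeplitz ((C r + C s * X) * P).coeff =
      Matrix.of fun i j => r * toeplitz P.coeff i j + s * toeplitz P.coeff (i + 1) j := by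
  ext i j
  rcases lt_trichotomy i j with hlt | rfl | hgt
  · obtain ⟨k, rfl⟩ := Nat.exists_eq_add_of_lt hlt
    have sub_row : i + k + 1 - i = k + 1 := by omega
    have sub_next_row : i + k + 1 - (i + 1) = k := by omega
    simp [toeplitz, add_mul, mul_assoc, sub_row, sub_next_row, show i ≤ i + k + 1 by omega]
  · simp [toeplitz, add_mul, mul_assoc]
  · simp [toeplitz, hgt.not_ge, hgt.not_gt]

theorem isTotallyPositive_one : IsTotallyPositive fun _ => 1 :=
  isTotallyNonneg_upperTriangular_ones

theorem isTotallyPositive_coeff_linear_mul {P : ℝ[X]} (hP : IsTotallyPositive P.coeff) {r s : ℝ}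
    (hr : 0 ≤ r) (hs : 0 ≤ s) : IsTotallyPositive ((C r + C s * X) * P).coeff := by
  rw [isTotallyPositive_iff_isTotallyNonneg_toeplitz] at hP ⊢
  rw [toeplitz_coeff_linear_mul]
  exact hP.bidiagonal_combination (fun _ => hr) fun _ => hs

end Toeplitz

/-! ### Real-rooted polynomials -/

theorem eval_pos_of_coeff_nonneg {R : Type*} [Semiring R] [PartialOrder R] [IsStrictOrderedRing R]
    {P : R[X]} (hP : P ≠ 0) (hcoeff : ∀ k, 0 ≤ P.coeff k) {x : R} (hx : 0 < x) : 0 < P.eval x := by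
  rw [eval_eq_sum]
  refine Finset.sum_pos (fun k hk => ?_) (nonempty_support_iff.2 hP)
  exact mul_pos ((hcoeff k).lt_of_ne' (mem_support_iff.1 hk)) (pow_pos hx k)

theorem isTotallyPositive_coeff_of_splits {P : ℝ[X]} (hP : P.Splits)
    (hcoeff : ∀ k, 0 ≤ P.coeff k) : IsTotallyPositive P.coeff := by
  have roots_nonpos : ∀ ρ ∈ P.roots, ρ ≤ 0 := fun ρ hρ => by
    by_contra! hpos
    exact (eval_pos_of_coeff_nonneg (ne_zero_of_mem_roots hρ) hcoeff hpos).ne'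
      (isRoot_of_mem_roots hρ)
  have prod_isTP : ∀ S : Multiset ℝ, (∀ ρ ∈ S, ρ ≤ 0) →
      IsTotallyPositive ((S.map fun ρ => X - C ρ).prod).coeff := by
    intro S
    induction S using Multiset.induction with
    | empty =>
      intro _
      rw [isTotallyPositive_iff_isTotallyNonneg_toeplitz, Multiset.map_zero, Multiset.prod_zero,
        toeplitz_coeff_one]
      exact isTotallyNonneg_one
    | cons ρ S ih =>
      intro hS
      have factor_eq : X - C ρ = C (-ρ) + C 1 * X := by
        rw [C_neg, C_1, one_mul, sub_eq_neg_add]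
      rw [Multiset.map_cons, Multiset.prod_cons, factor_eq]
      exact isTotallyPositive_coeff_linear_mul
        (ih fun σ hσ => hS σ (Multiset.mem_cons_of_mem hσ))
        (neg_nonneg.2 (hS ρ (Multiset.mem_cons_self ρ S))) zero_le_one
  have := isTotallyPositive_coeff_linear_mul (prod_isTP P.roots roots_nonpos)
    (hcoeff P.natDegree) le_rfl
  rwa [C_0, zero_mul, add_zero, coeff_natDegree, ← hP.eq_prod_roots] at this

section Quadratic

variable {K : Type*} [Field K] [NeZero (2 : K)]

theorem splits_quadratic_of_isSquare_discrim {a b c : K} (h : IsSquare (discrim a b c)) :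
    (C a * X ^ 2 + C b * X + C c).Splits := by
  rcases eq_or_ne a 0 with rfl | ha
  · rw [C_0, zero_mul, zero_add]
    exact Splits.of_natDegree_le_one natDegree_linear_le
  · obtain ⟨x, hx⟩ := exists_quadratic_eq_zero ha h
    exact Splits.of_natDegree_eq_two (natDegree_quadratic ha) (x := x) (by simpa [sq] using hx)

end Quadratic

theorem forall_complex_root_real_iff_discrim_nonneg {a b c : ℝ} (ha : a ≠ 0) :
    (∀ z : ℂ, (c : ℂ) + b * z + a * z ^ 2 = 0 → ∃ x : ℝ, z = x) ↔ 0 ≤ discrim a b c := by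
  have ha' : (a : ℂ) ≠ 0 := Complex.ofReal_ne_zero.2 ha
  have root_iff (z : ℂ) :
      (c : ℂ) + b * z + a * z ^ 2 = 0 ↔ (a : ℂ) * (z * z) + b * z + c = 0 := by
    rw [sq]; ring_nf
  have discrim_cast : discrim (a : ℂ) b c = (discrim a b c : ℝ) := by
    simp [discrim]
  simp only [root_iff]
  constructor
  · intro hreal
    obtain ⟨z, hz⟩ :=
      exists_quadratic_eq_zero ha' (IsAlgClosed.exists_eq_mul_self (discrim (a : ℂ) b c))
    obtain ⟨x, rfl⟩ := hreal z hz
    rw [discrim_eq_sq_of_quadratic_eq_zero (x := x) (mod_cast hz)]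
    exact sq_nonneg _
  · intro hdiscrim z hz
    have discrim_eq : discrim (a : ℂ) b c = √(discrim a b c) * √(discrim a b c) := by
      rw [discrim_cast, ← Complex.ofReal_mul, Real.mul_self_sqrt hdiscrim]
    rcases (quadratic_eq_zero_iff ha' discrim_eq z).1 hz with rfl | rfl
    · exact ⟨(-b + √(discrim a b c)) / (2 * a), by push_cast; rfl⟩
    · exact ⟨(-b - √(discrim a b c)) / (2 * a), by push_cast; rfl⟩

theorem isTotallyPositive_of_discrim_nonneg {a : ℕ → ℝ} (hnonneg : ∀ k, 0 ≤ a k)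
    (hsupp : ∀ k, 3 ≤ k → a k = 0) (hdiscrim : 0 ≤ discrim (a 2) (a 1) (a 0)) :
    IsTotallyPositive a := by
  have coeff_eq : (C (a 2) * X ^ 2 + C (a 1) * X + C (a 0)).coeff = a := by
    funext k
    match k with
    | 0 => simp
    | 1 => simp [coeff_C]
    | 2 => simp
    | k + 3 => simp [hsupp (k + 3) le_add_self]
  rw [← coeff_eq]
  exact isTotallyPositive_coeff_of_splits
    (splits_quadratic_of_isSquare_discrim (Real.isSquare_iff.2 hdiscrim)) (by rwa [coeff_eq])

/-! ### Tridiagonal minors and Chebyshev polynomials -/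

section Tridiagonal

variable {R : Type*} [CommRing R]

/-- The minor `det (a_{q + 1 - p})_{p, q < n}` of the Toeplitz matrix of `a`, tridiagonal when
`a_k = 0` for `k ≥ 3`. -/
def tridiagonalMinor (a : ℕ → R) (n : ℕ) : R :=
  ((toeplitz a).submatrix (fun p : Fin n => (p : ℕ)) fun q : Fin n => (q : ℕ) + 1).det

theorem tridiagonalMinor_add_two {a : ℕ → R} (hsupp : ∀ k, 3 ≤ k → a k = 0) (n : ℕ) :
    tridiagonalMinor a (n + 2) =
      a 1 * tridiagonalMinor a (n + 1) - a 0 * a 2 * tridiagonalMinor a n := by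
  let M : Matrix (Fin (n + 2)) (Fin (n + 2)) R :=
    (toeplitz a).submatrix (fun p => (p : ℕ)) fun q => (q : ℕ) + 1
  have minor_zero : (M.submatrix (Fin.succAbove 0) Fin.succ).det = tridiagonalMinor a (n + 1) := by
    rw [tridiagonalMinor]
    congr 1
    ext p q
    simp [M, toeplitz]
  have minor_one : (M.submatrix (Fin.succAbove 1) Fin.succ).det = a 2 * tridiagonalMinor a n := by
    rw [det_eq_mul_det_succ_of_row_zero _ fun q => by simp [M, toeplitz, hsupp], tridiagonalMinor]
    congr 2
    ext p q
    simp [M, toeplitz]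
  have column_zero (p : Fin n) : M p.succ.succ 0 = 0 := by simp [M, toeplitz]
  calc tridiagonalMinor a (n + 2) = M.det := rfl
    _ = M 0 0 * (M.submatrix (Fin.succAbove 0) Fin.succ).det -
        M 1 0 * (M.submatrix (Fin.succAbove 1) Fin.succ).det := by
      simp [Matrix.det_succ_column_zero, Fin.sum_univ_succ, column_zero, sub_eq_add_neg]
    _ = a 1 * tridiagonalMinor a (n + 1) - a 0 * a 2 * tridiagonalMinor a n := by
      rw [minor_zero, minor_one]
      simp [M, toeplitz, mul_assoc]

theorem tridiagonalMinor_eq_chebyshevU {a : ℕ → R} (hsupp : ∀ k, 3 ≤ k → a k = 0) {r x : R}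
    (hr : a 0 * a 2 = r ^ 2) (hx : a 1 = 2 * r * x) (n : ℕ) :
    tridiagonalMinor a n = r ^ n * (Chebyshev.U R n).eval x := by
  induction n using Nat.twoStepInduction with
  | zero => simp [tridiagonalMinor]
  | one => simp [tridiagonalMinor, toeplitz, hx]; ring
  | more n ih ih' =>
    rw [tridiagonalMinor_add_two hsupp, ih, ih', hr, hx]
    push_cast
    rw [Chebyshev.U_add_two]
    simp
    ring

end Tridiagonal

theorem exists_chebyshevU_eval_neg {x : ℝ} (hx : |x| < 1) :
    ∃ n : ℕ, (Chebyshev.U ℝ n).eval x < 0 := by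
  obtain ⟨hneg, hlt⟩ := abs_lt.1 hx
  set θ := Real.arccos x
  have θ_pos : 0 < θ := Real.arccos_pos.2 hlt
  have θ_lt_pi : θ < Real.pi :=
    (Real.arccos_le_pi x).lt_of_ne fun h => hneg.not_ge (Real.arccos_eq_pi.1 h)
  -- This `n` puts `(n + 1) * θ` in `(π, 2π)`.
  refine ⟨⌊Real.pi / θ⌋₊, ?_⟩
  have lower : Real.pi < (⌊Real.pi / θ⌋₊ + 1) * θ :=
    (div_lt_iff₀ θ_pos).1 (Nat.lt_floor_add_one _)
  have upper : (⌊Real.pi / θ⌋₊ : ℝ) * θ ≤ Real.pi :=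
    (le_div_iff₀ θ_pos).1 (Nat.floor_le (by positivity))
  have sin_neg : Real.sin ((⌊Real.pi / θ⌋₊ + 1) * θ) < 0 := by
    rw [← Real.sin_sub_two_pi]
    exact Real.sin_neg_of_neg_of_neg_pi_lt (by linarith) (by linarith)
  have U_mul_sin := Chebyshev.U_real_cos θ ⌊Real.pi / θ⌋₊
  rw [Real.cos_arccos hneg.le hlt.le] at U_mul_sin
  refine neg_of_mul_neg_left ?_ (Real.sin_pos_of_pos_of_lt_pi θ_pos θ_lt_pi).le
  rw [U_mul_sin]
  exact_mod_cast sin_neg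

theorem IsTotallyPositive.discrim_nonneg {a : ℕ → ℝ} (ha : IsTotallyPositive a)
    (hsupp : ∀ k, 3 ≤ k → a k = 0) : 0 ≤ discrim (a 2) (a 1) (a 0) := by
  by_contra! hneg
  rw [discrim] at hneg
  have prod_pos : 0 < a 0 * a 2 := by linarith [sq_nonneg (a 1)]
  set r := √(a 0 * a 2)
  have r_pos : 0 < r := Real.sqrt_pos.2 prod_pos
  have r_sq : a 0 * a 2 = r ^ 2 := (Real.sq_sqrt prod_pos.le).symm
  have cos_lt : |a 1 / (2 * r)| < 1 := by
    rw [← sq_lt_one_iff_abs_lt_one, div_pow, div_lt_one (by positivity)]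
    linarith
  obtain ⟨n, hn⟩ := exists_chebyshevU_eval_neg cos_lt
  have minor_nonneg : 0 ≤ tridiagonalMinor a n :=
    ha n _ _ Fin.val_strictMono (Fin.val_strictMono.add_const 1)
  rw [tridiagonalMinor_eq_chebyshevU hsupp r_sq
    (x := a 1 / (2 * r)) (by field_simp)] at minor_nonneg
  exact minor_nonneg.not_gt (mul_neg_of_pos_of_neg (pow_pos r_pos n) hn)

/-! ### Preservers -/

theorem IsTotallyPositive.isMultiplyPositive {b : ℕ → ℝ} (hb : IsTotallyPositive b) (m : ℕ) :
    IsMultiplyPositive m b :=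
  fun n _ => hb n

theorem IsMultiplyPositive.nonneg {m : ℕ} {b : ℕ → ℝ} (hb : IsMultiplyPositive m b) (hm : 1 ≤ m)
    (k : ℕ) : 0 ≤ b k := by
  simpa using hb 1 hm ![0] ![k] (Subsingleton.strictMono _) (Subsingleton.strictMono _)

theorem IsMultiplyPositive.mul_le_sq {m : ℕ} {b : ℕ → ℝ} (hb : IsMultiplyPositive m b)
    (hm : 2 ≤ m) (k : ℕ) : b k * b (k + 2) ≤ b (k + 1) ^ 2 := by
  have minor_nonneg := hb 2 hm ![0, 1] ![k + 1, k + 2] (by simp [Fin.strictMono_iff_lt_succ])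
    (by simp [Fin.strictMono_iff_lt_succ])
  have : 0 ≤ b (k + 1) * b (k + 1) - b (k + 2) * b k := by
    simpa [Matrix.det_fin_two] using minor_nonneg
  linarith

theorem IsTPPreserver.isTotallyPositive {a : ℕ → ℝ} (ha : IsTPPreserver a) :
    IsTotallyPositive a := by
  simpa using ha _ isTotallyPositive_one

theorem isTotallyPositive_mul_of_isMultiplyPositive_two {a b : ℕ → ℝ} (hnonneg : ∀ k, 0 ≤ a k)
    (hsupp : ∀ k, 3 ≤ k → a k = 0) (hdiscrim : 0 ≤ discrim (a 2) (a 1) (a 0))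
    (hb : IsMultiplyPositive 2 b) : IsTotallyPositive fun k => a k * b k := by
  refine isTotallyPositive_of_discrim_nonneg
    (fun k => mul_nonneg (hnonneg k) (hb.nonneg one_le_two k))
    (fun k hk => by rw [hsupp k hk, zero_mul]) ?_
  rw [discrim] at hdiscrim ⊢
  refine sub_nonneg.2 ?_
  calc 4 * (a 2 * b 2) * (a 0 * b 0) = 4 * a 2 * a 0 * (b 0 * b 2) := by ring
    _ ≤ 4 * a 2 * a 0 * b 1 ^ 2 := by
      gcongr
      · exact mul_nonneg (mul_nonneg zero_le_four (hnonneg 2)) (hnonneg 0)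
      · exact hb.mul_le_sq le_rfl 0
    _ ≤ a 1 ^ 2 * b 1 ^ 2 := by gcongr; linarith
    _ = (a 1 * b 1) ^ 2 := by ring

/-- three-term sequences. -/
theorem stmt_1 (a : ℕ → ℝ) (h0 : 0 < a 0) (h1 : 0 < a 1) (h2 : 0 < a 2)
    (h3 : ∀ k, 3 ≤ k → a k = 0) :
    (IsTPPreserver a ↔
      ∀ z : ℂ, (a 0 : ℂ) + (a 1 : ℂ) * z + (a 2 : ℂ) * z ^ 2 = 0 → ∃ x : ℝ, z = (x : ℂ)) ∧
    ((∀ z : ℂ, (a 0 : ℂ) + (a 1 : ℂ) * z + (a 2 : ℂ) * z ^ 2 = 0 → ∃ x : ℝ, z = (x : ℂ)) ↔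
      a 1 ^ 2 - 4 * a 0 * a 2 ≥ 0) ∧
    (IsTPPreserver a ↔
      ∀ b : ℕ → ℝ, IsMultiplyPositive 2 b → IsTotallyPositive fun k => a k * b k) := by
  have hnonneg : ∀ k, 0 ≤ a k
    | 0 => h0.le
    | 1 => h1.le
    | 2 => h2.le
    | k + 3 => (h3 (k + 3) le_add_self).ge
  have real_zeros_iff := forall_complex_root_real_iff_discrim_nonneg (b := a 1) (c := a 0) h2.ne'
  have discrim_eq : discrim (a 2) (a 1) (a 0) = a 1 ^ 2 - 4 * a 0 * a 2 := by rw [discrim]; ring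
  have discrim_of_preserver (ha : IsTPPreserver a) : 0 ≤ discrim (a 2) (a 1) (a 0) :=
    ha.isTotallyPositive.discrim_nonneg h3
  have maps_TP2_of_discrim (hdiscrim : 0 ≤ discrim (a 2) (a 1) (a 0)) (b : ℕ → ℝ)
      (hb : IsMultiplyPositive 2 b) : IsTotallyPositive fun k => a k * b k :=
    isTotallyPositive_mul_of_isMultiplyPositive_two hnonneg h3 hdiscrim hb
  have preserver_of_maps_TP2
      (h : ∀ b : ℕ → ℝ, IsMultiplyPositive 2 b → IsTotallyPositive fun k => a k * b k) :
      IsTPPreserver a := fun b hb => h b (hb.isMultiplyPositive 2)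
  rw [real_zeros_iff, ← discrim_eq]
  exact ⟨⟨discrim_of_preserver, fun h => preserver_of_maps_TP2 (maps_TP2_of_discrim h)⟩, Iff.rfl,
    ⟨fun h => maps_TP2_of_discrim (discrim_of_preserver h), preserver_of_maps_TP2⟩⟩
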